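/- arXiv:2403.13223 — 3 statements merged into one kernel-verified Lean document; each statement's English description precedes it below -/
import Mathlib

section
/- Let N ≥ 1 and let S be a real N×N skew-symmetric matrix (Sᵀ = −S). For every real number c > 0 with c ≥ λmax(S)/2, there exist real orthogonal N×N matrices Q₁ and Q₂ (Qᵢᵀ·Qᵢ = 1) such that S = c·(Q₁ + Q₂). In particular, there exist orthogonal Q₁, Q₂ and a positive c ≥ λmax(S)/2 with S = c·(Q₁ + Q₂). -/
open Matrix

/-- The largest singular value of a real matrix: the operator norm of the induced linear
map on Euclidean space. -/
noncomputable def lamMax (N : ℕ) (S : Matrix (Fin N) (Fin N) ℝ) : ℝ :=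
  ‖LinearMap.toContinuousLinearMap (Matrix.toEuclideanLin S)‖

/-!
Rescaling by `2 * c` reduces to a skew-adjoint contraction `a`. Since `star a * a = -a ^ 2 ≤ 1`, the
continuous functional calculus gives a self-adjoint `r` commuting with `a` such that
`r ^ 2 = 1 + a ^ 2`. Then `star (a ± r) * (a ± r) = r ^ 2 - a ^ 2 = 1`, and `a` is the average of
`a + r` and `a - r`.
-/

theorem add_mem_unitary_of_mem_skewAdjoint {R : Type*} [Ring R] [StarRing R] {a r : R}
    (ha : a ∈ skewAdjoint R) (hr : IsSelfAdjoint r) (hcomm : Commute r a)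
    (hsq : r * r - a * a = 1) : a + r ∈ unitary R := by
  have hstar : star (a + r) = r - a := by
    rw [star_add, skewAdjoint.mem_iff.mp ha, hr.star_eq, neg_add_eq_sub]
  rw [Unitary.mem_iff, hstar, add_comm a r]
  exact ⟨by rw [← hcomm.mul_self_sub_mul_self_eq', hsq],
    by rw [← hcomm.mul_self_sub_mul_self_eq, hsq]⟩

theorem cfc_sqrt_one_sub_mul_self {A : Type*} [Ring A] [StarRing A] [TopologicalSpace A]
    [Algebra ℝ A] [ContinuousFunctionalCalculus ℝ A IsSelfAdjoint] {b : A}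
    (hb : IsSelfAdjoint b) (hspec : ∀ x ∈ spectrum ℝ b, x ≤ 1) :
    cfc (fun x : ℝ ↦ √(1 - x)) b * cfc (fun x : ℝ ↦ √(1 - x)) b = 1 - b :=
  calc
    _ = cfc (fun x : ℝ ↦ √(1 - x) * √(1 - x)) b := (cfc_mul _ _ b).symm
    _ = cfc (fun x : ℝ ↦ 1 - x) b :=
      cfc_congr fun x hx ↦ Real.mul_self_sqrt (sub_nonneg.mpr (hspec x hx))
    _ = 1 - b := by rw [cfc_sub (fun _ ↦ 1) (fun x ↦ x) b, cfc_const_one ℝ b, cfc_id' ℝ b]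

section CStarRing

variable {A : Type*} [NormedRing A] [StarRing A] [CStarRing A] [CompleteSpace A]
  [NormedAlgebra ℝ A]

theorem le_one_of_mem_spectrum_star_mul_self {a : A} (ha : ‖a‖ ≤ 1) {x : ℝ}
    (hx : x ∈ spectrum ℝ (star a * a)) : x ≤ 1 := by
  rcases subsingleton_or_nontrivial A with _ | _
  · simp only [spectrum.of_subsingleton, Set.mem_empty_iff_false] at hx
  calc
    x ≤ ‖star a * a‖ := (Real.le_norm_self x).trans (spectrum.norm_le_norm_of_mem hx)
    _ = ‖a‖ * ‖a‖ := CStarRing.norm_star_mul_self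
    _ ≤ 1 := mul_le_one₀ ha (norm_nonneg a) ha

variable [ContinuousFunctionalCalculus ℝ A IsSelfAdjoint]

theorem exists_isSelfAdjoint_commute_mul_self_sub_eq_one {a : A} (ha : a ∈ skewAdjoint A)
    (hnorm : ‖a‖ ≤ 1) : ∃ r : A, IsSelfAdjoint r ∧ Commute r a ∧ r * r - a * a = 1 := by
  have hstar : star a * a = -(a * a) := by rw [skewAdjoint.mem_iff.mp ha, neg_mul]
  have hcomm : Commute (star a * a) a := by
    rw [hstar]
    exact ((Commute.refl a).mul_left (Commute.refl a)).neg_left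
  refine ⟨cfc (fun x : ℝ ↦ √(1 - x)) (star a * a), cfc_predicate _ _, hcomm.cfc_real _, ?_⟩
  rw [cfc_sqrt_one_sub_mul_self (.star_mul_self a)
    fun _ ↦ le_one_of_mem_spectrum_star_mul_self hnorm, hstar, sub_neg_eq_add, add_sub_cancel_right]

theorem exists_unitary_add_eq_two_smul {a : A} (ha : a ∈ skewAdjoint A) (hnorm : ‖a‖ ≤ 1) :
    ∃ u₁ ∈ unitary A, ∃ u₂ ∈ unitary A, u₁ + u₂ = (2 : ℝ) • a := by
  obtain ⟨r, hr, hcomm, hsq⟩ :=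
    exists_isSelfAdjoint_commute_mul_self_sub_eq_one ha hnorm
  refine ⟨a + r, add_mem_unitary_of_mem_skewAdjoint ha hr hcomm hsq,
    a + -r, add_mem_unitary_of_mem_skewAdjoint ha hr.neg hcomm.neg_left ?_, ?_⟩
  · rwa [neg_mul_neg]
  · rw [two_smul]
    abel

theorem exists_unitary_eq_smul_add [StarModule ℝ A] {a : A} (ha : a ∈ skewAdjoint A) {c : ℝ}
    (hc : 0 < c) (hac : ‖a‖ / 2 ≤ c) :
    ∃ u₁ u₂ : A, u₁ ∈ unitary A ∧ u₂ ∈ unitary A ∧ a = c • (u₁ + u₂) := by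
  have hnorm : ‖(2 * c)⁻¹ • a‖ ≤ 1 := by
    rw [norm_smul, Real.norm_of_nonneg (by positivity), inv_mul_le_one₀ (by positivity)]
    linarith
  obtain ⟨u₁, hu₁, u₂, hu₂, hadd⟩ :=
    exists_unitary_add_eq_two_smul (skewAdjoint.smul_mem _ ha) hnorm
  refine ⟨u₁, u₂, hu₁, hu₂, ?_⟩
  rw [hadd, smul_smul, smul_smul, mul_comm c 2, mul_inv_cancel₀ (by positivity), one_smul]

theorem skew_eq_smul_add_orthogonal_general [StarModule ℝ A] {a : A} (ha : a ∈ skewAdjoint A) :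
    (∀ c : ℝ, 0 < c → ‖a‖ / 2 ≤ c →
      ∃ u₁ u₂ : A, u₁ ∈ unitary A ∧ u₂ ∈ unitary A ∧ a = c • (u₁ + u₂)) ∧
    ∃ (c : ℝ) (u₁ u₂ : A), 0 < c ∧ ‖a‖ / 2 ≤ c ∧
      u₁ ∈ unitary A ∧ u₂ ∈ unitary A ∧ a = c • (u₁ + u₂) := by
  have hpos : 0 < ‖a‖ / 2 + 1 := by positivity
  have hle : ‖a‖ / 2 ≤ ‖a‖ / 2 + 1 := le_add_of_nonneg_right zero_le_one
  obtain ⟨u₁, u₂, h⟩ := exists_unitary_eq_smul_add ha hpos hle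
  exact ⟨fun _ ↦ exists_unitary_eq_smul_add ha, ‖a‖ / 2 + 1, u₁, u₂, hpos, hle, h⟩

end CStarRing

open scoped Matrix.Norms.L2Operator in
theorem lamMax_eq_l2_opNorm (N : ℕ) (S : Matrix (Fin N) (Fin N) ℝ) : lamMax N S = ‖S‖ :=
  rfl

/-- Every real skew-symmetric matrix `S` is `c` times a sum of two orthogonal matrices,
for every `c > 0` with `c ≥ λmax(S)/2`; in particular such a decomposition exists. -/
theorem skew_eq_smul_add_orthogonal (N : ℕ) (hN : 1 ≤ N)
    (S : Matrix (Fin N) (Fin N) ℝ) (hS : Sᵀ = -S) :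
    (∀ c : ℝ, 0 < c → lamMax N S / 2 ≤ c →
      ∃ Q₁ Q₂ : Matrix (Fin N) (Fin N) ℝ,
        Q₁ᵀ * Q₁ = 1 ∧ Q₂ᵀ * Q₂ = 1 ∧ S = c • (Q₁ + Q₂)) ∧
    ∃ (c : ℝ) (Q₁ Q₂ : Matrix (Fin N) (Fin N) ℝ), 0 < c ∧ lamMax N S / 2 ≤ c ∧
      Q₁ᵀ * Q₁ = 1 ∧ Q₂ᵀ * Q₂ = 1 ∧ S = c • (Q₁ + Q₂) := by
  open scoped Matrix.Norms.L2Operator in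
  simpa only [← Matrix.mem_orthogonalGroup_iff', lamMax_eq_l2_opNorm] using
    skew_eq_smul_add_orthogonal_general (skewAdjoint.mem_iff.mpr hS)
end

section
/- Fix an integer d ≥ 1, let ρ be a d×d complex density matrix and H a d×d complex Hermitian matrix. Then the traces Tr(H·ρ) and Tr(H²·ρ) are real, Tr(H²·ρ) − Tr(H·ρ)² ≥ 0, and ‖H·ρ − ρ·H‖_F² ≤ 2·(Tr(H²·ρ) − Tr(H·ρ)²). That is, the instantaneous speed of the unitary evolution generated by H at the state ρ is at most √2 times the energy standard deviation. -/
open Matrix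
open scoped ComplexOrder

/-- A density matrix: Hermitian, positive semidefinite, trace one. -/
def IsDensityMatrix {d : ℕ} (ρ : Matrix (Fin d) (Fin d) ℂ) : Prop :=
  ρ.IsHermitian ∧ ρ.PosSemidef ∧ ρ.trace = 1

/-- The Frobenius (Hilbert–Schmidt) norm `‖M‖_F = √(Tr(M·Mᴴ))`. -/
noncomputable def frobNorm {d : ℕ} (M : Matrix (Fin d) (Fin d) ℂ) : ℝ :=
  Real.sqrt ((M * Mᴴ).trace).re

/-!
For positive semidefinite `ρ` and the Frobenius norm, dropping the cross term `Tr(AρAᴴρ) ≥ 0`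
from the expansion of `‖Aρ - ρA‖²` leaves `‖Aρ‖² + ‖Aᴴρ‖²`, and factoring `ρ = BᴴB` gives
`‖Aρ‖² ≤ ‖ABᴴ‖² ‖B‖² = Tr ρ · Tr(AρAᴴ)`. Neither the commutator nor the variance changes when a
scalar is subtracted from `A`; after centring `A` at its mean, `Tr ρ · Tr(AρAᴴ)` is the variance.
-/

section Variance

variable {R n : Type*} [CommRing R] [StarRing R] [Fintype n]

/-- The variance of an operator `A` in an unnormalized state `ρ`, scaled to be homogeneous of degree
two in `ρ`, for stating the speed bound without normalization. If `Tr ρ = 1` and `A` is Hermitian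
it is `Tr(A²ρ) - Tr(Aρ)²`. -/
def traceVariance (ρ A : Matrix n n R) : R :=
  ρ.trace * (A * ρ * Aᴴ).trace - (A * ρ).trace * (ρ * Aᴴ).trace

lemma traceVariance_of_trace_mul_eq_zero {ρ A : Matrix n n R} (h : (A * ρ).trace = 0) :
    traceVariance ρ A = ρ.trace * (A * ρ * Aᴴ).trace := by
  rw [traceVariance, h, zero_mul, sub_zero]

lemma traceVariance_of_isHermitian (ρ : Matrix n n R) {H : Matrix n n R} (hH : H.IsHermitian) :
    traceVariance ρ H = ρ.trace * (H * H * ρ).trace - (H * ρ).trace ^ 2 := by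
  rw [traceVariance, hH.eq, trace_mul_comm (H * ρ) H, trace_mul_comm ρ H, ← Matrix.mul_assoc, sq]

lemma traceVariance_sub_smul_one [DecidableEq n] (ρ A : Matrix n n R) (c : R) :
    traceVariance ρ (A - c • 1) = traceVariance ρ A := by
  simp only [traceVariance, conjTranspose_sub, conjTranspose_smul, conjTranspose_one, sub_mul,
    mul_sub, smul_mul_assoc, mul_smul_comm, one_mul, mul_one, trace_sub, trace_smul, smul_eq_mul]
  ring

end Variance

section Positivity

variable {𝕜 n : Type*} [RCLike 𝕜] [Fintype n] {ρ σ A B : Matrix n n 𝕜}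

lemma exists_eq_conjTranspose_mul_self (hρ : ρ.PosSemidef) : ∃ B : Matrix n n 𝕜, ρ = Bᴴ * B := by
  classical
  open scoped MatrixOrder in
  exact CStarAlgebra.nonneg_iff_eq_star_mul_self.mp hρ.nonneg

lemma trace_mul_nonneg (hρ : ρ.PosSemidef) (hσ : σ.PosSemidef) : 0 ≤ (ρ * σ).trace := by
  obtain ⟨B, rfl⟩ := exists_eq_conjTranspose_mul_self hσ
  rw [← Matrix.mul_assoc, trace_mul_comm, ← Matrix.mul_assoc]
  exact (hρ.mul_mul_conjTranspose_same B).trace_nonneg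

lemma im_trace_mul_eq_zero (hA : A.IsHermitian) (hB : B.IsHermitian) :
    RCLike.im (A * B).trace = 0 := by
  rw [← RCLike.conj_eq_iff_im, starRingEnd_apply, ← trace_conjTranspose, conjTranspose_mul,
    hA.eq, hB.eq, trace_mul_comm]

lemma exists_trace_sub_smul_one_mul_eq_zero [DecidableEq n] (hρ : ρ.PosSemidef)
    (A : Matrix n n 𝕜) : ∃ c : 𝕜, ((A - c • 1) * ρ).trace = 0 := by
  by_cases hτ : ρ.trace = 0
  · exact ⟨0, by rw [hρ.trace_eq_zero_iff.mp hτ, Matrix.mul_zero, trace_zero]⟩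
  · refine ⟨(A * ρ).trace / ρ.trace, ?_⟩
    rw [sub_mul, smul_mul_assoc, one_mul, trace_sub, trace_smul, smul_eq_mul,
      div_mul_cancel₀ _ hτ, sub_self]

lemma traceVariance_nonneg (hρ : ρ.PosSemidef) (A : Matrix n n 𝕜) : 0 ≤ traceVariance ρ A := by
  classical
  obtain ⟨c, hc⟩ := exists_trace_sub_smul_one_mul_eq_zero hρ A
  rw [← traceVariance_sub_smul_one ρ A c, traceVariance_of_trace_mul_eq_zero hc]
  exact mul_nonneg hρ.trace_nonneg (hρ.mul_mul_conjTranspose_same _).trace_nonneg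

end Positivity

section Frobenius

open RCLike
open scoped Matrix.Norms.Frobenius

variable {𝕜 m n : Type*} [RCLike 𝕜] [Fintype m] [Fintype n] {ρ : Matrix n n 𝕜}

lemma frobenius_norm_sq_eq_re_trace (M : Matrix m n 𝕜) : ‖M‖ ^ 2 = re (M * Mᴴ).trace := by
  rw [frobenius_norm_def, ← Real.sqrt_eq_rpow, Real.sq_sqrt (by positivity)]
  simp only [Real.rpow_ofNat, trace, diag_apply, mul_apply, conjTranspose_apply, map_sum,
    star_def, mul_conj, ← ofReal_pow, ofReal_re]

lemma frobNorm_eq_norm {d : ℕ} (M : Matrix (Fin d) (Fin d) ℂ) : frobNorm M = ‖M‖ :=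
  (congrArg Real.sqrt (frobenius_norm_sq_eq_re_trace M).symm).trans (Real.sqrt_sq (norm_nonneg M))

lemma frobenius_norm_sub_sq (M N : Matrix m n 𝕜) :
    ‖M - N‖ ^ 2 = ‖M‖ ^ 2 + ‖N‖ ^ 2 - 2 * re (M * Nᴴ).trace := by
  have hNM : re (N * Mᴴ).trace = re (M * Nᴴ).trace := by
    rw [← conj_re (M * Nᴴ).trace, starRingEnd_apply, ← trace_conjTranspose, conjTranspose_mul,
      conjTranspose_conjTranspose]
  simp only [frobenius_norm_sq_eq_re_trace, conjTranspose_sub, Matrix.sub_mul, Matrix.mul_sub,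
    trace_sub, map_sub, hNM]
  ring

lemma frobenius_norm_mul_sub_mul_sq_le {σ : Matrix m m 𝕜} (hρ : ρ.PosSemidef)
    (hσ : σ.PosSemidef) (A : Matrix m n 𝕜) :
    ‖A * ρ - σ * A‖ ^ 2 ≤ ‖A * ρ‖ ^ 2 + ‖Aᴴ * σ‖ ^ 2 := by
  have hadj : (σ * A)ᴴ = Aᴴ * σ := by rw [conjTranspose_mul, hσ.isHermitian.eq]
  have hcross : 0 ≤ re (A * ρ * (σ * A)ᴴ).trace := by
    rw [hadj, ← Matrix.mul_assoc]
    exact (nonneg_iff.mp (trace_mul_nonneg (hρ.mul_mul_conjTranspose_same A) hσ)).1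
  rw [frobenius_norm_sub_sq, ← hadj, frobenius_norm_conjTranspose]
  linarith

lemma frobenius_norm_mul_sq_le_trace (hρ : ρ.PosSemidef) (A : Matrix m n 𝕜) :
    ‖A * ρ‖ ^ 2 ≤ re (ρ.trace * (A * ρ * Aᴴ).trace) := by
  obtain ⟨B, hB⟩ := exists_eq_conjTranspose_mul_self hρ
  have hnormB : ‖B‖ ^ 2 = re ρ.trace := by
    rw [frobenius_norm_sq_eq_re_trace, trace_mul_comm, hB]
  have hnormAB : ‖A * Bᴴ‖ ^ 2 = re (A * ρ * Aᴴ).trace := by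
    rw [frobenius_norm_sq_eq_re_trace, hB, conjTranspose_mul, conjTranspose_conjTranspose]
    simp only [Matrix.mul_assoc]
  calc ‖A * ρ‖ ^ 2 = ‖A * Bᴴ * B‖ ^ 2 := by rw [Matrix.mul_assoc, ← hB]
    _ ≤ (‖A * Bᴴ‖ * ‖B‖) ^ 2 := by gcongr; exact frobenius_norm_mul _ _
    _ = re (ρ.trace * (A * ρ * Aᴴ).trace) := by
      rw [mul_pow, hnormAB, hnormB, mul_re, (nonneg_iff.mp hρ.trace_nonneg).2, zero_mul, sub_zero,
        mul_comm]

lemma frobenius_norm_commutator_sq_le_traceVariance (hρ : ρ.PosSemidef) (A : Matrix n n 𝕜) :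
    ‖A * ρ - ρ * A‖ ^ 2 ≤ re (traceVariance ρ A) + re (traceVariance ρ Aᴴ) := by
  classical
  obtain ⟨c, hc⟩ := exists_trace_sub_smul_one_mul_eq_zero hρ A
  set K := A - c • 1 with hK
  have hcomm : A * ρ - ρ * A = K * ρ - ρ * K := by
    simp only [hK, sub_mul, mul_sub, smul_mul_assoc, mul_smul_comm, one_mul, mul_one,
      sub_sub_sub_cancel_right]
  have hvar : traceVariance ρ A = ρ.trace * (K * ρ * Kᴴ).trace := by
    rw [← traceVariance_sub_smul_one ρ A c, traceVariance_of_trace_mul_eq_zero hc]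
  have hc' : (Kᴴ * ρ).trace = 0 := by
    rw [← hρ.isHermitian.eq, ← conjTranspose_mul, trace_conjTranspose, trace_mul_comm, hc,
      star_zero]
  have hvar' : traceVariance ρ Aᴴ = ρ.trace * (Kᴴ * ρ * Kᴴᴴ).trace := by
    rw [← traceVariance_of_trace_mul_eq_zero hc', hK, conjTranspose_sub, conjTranspose_smul,
      conjTranspose_one, traceVariance_sub_smul_one]
  rw [hcomm, hvar, hvar']
  exact (frobenius_norm_mul_sub_mul_sq_le hρ hρ K).trans
    (add_le_add (frobenius_norm_mul_sq_le_trace hρ K) (frobenius_norm_mul_sq_le_trace hρ Kᴴ))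

theorem commutator_frobNorm_le_variance_general {H : Matrix n n 𝕜} [DecidableEq n]
    (hρ : ρ.PosSemidef) (hH : H.IsHermitian) :
    im (H * ρ).trace = 0 ∧ im (H ^ 2 * ρ).trace = 0 ∧
    0 ≤ re ρ.trace * re (H ^ 2 * ρ).trace - re (H * ρ).trace ^ 2 ∧
    ‖H * ρ - ρ * H‖ ^ 2 ≤
      2 * (re ρ.trace * re (H ^ 2 * ρ).trace - re (H * ρ).trace ^ 2) := by
  have hmean : im (H * ρ).trace = 0 := im_trace_mul_eq_zero hH hρ.isHermitian
  have hvar : re (traceVariance ρ H) =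
      re ρ.trace * re (H ^ 2 * ρ).trace - re (H * ρ).trace ^ 2 := by
    rw [traceVariance_of_isHermitian ρ hH, ← sq, map_sub, mul_re, sq (H * ρ).trace, mul_re, hmean,
      (nonneg_iff.mp hρ.trace_nonneg).2]
    ring
  refine ⟨hmean, im_trace_mul_eq_zero (hH.pow 2) hρ.isHermitian, ?_, ?_⟩
  · exact hvar ▸ (nonneg_iff.mp (traceVariance_nonneg hρ H)).1
  · have hspeed := frobenius_norm_commutator_sq_le_traceVariance hρ H
    rwa [hH.eq, ← two_mul, hvar] at hspeed

end Frobenius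

/-- For a density matrix `ρ` and a Hermitian `H`, the traces `Tr(Hρ)` and `Tr(H²ρ)` are
real, the energy variance is nonnegative, and the instantaneous speed of the unitary
evolution generated by `H` satisfies `‖Hρ − ρH‖_F² ≤ 2·(Tr(H²ρ) − Tr(Hρ)²)`. -/
theorem commutator_frobNorm_le_variance (d : ℕ) (hd : 1 ≤ d)
    (ρ H : Matrix (Fin d) (Fin d) ℂ)
    (hρ : IsDensityMatrix ρ) (hH : H.IsHermitian) :
    ((H * ρ).trace).im = 0 ∧ ((H ^ 2 * ρ).trace).im = 0 ∧
    0 ≤ ((H ^ 2 * ρ).trace).re - ((H * ρ).trace).re ^ 2 ∧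
    frobNorm (H * ρ - ρ * H) ^ 2 ≤
      2 * (((H ^ 2 * ρ).trace).re - ((H * ρ).trace).re ^ 2) := by
  simpa [frobNorm_eq_norm, hρ.2.2] using commutator_frobNorm_le_variance_general hρ.2.1 hH
end

section
/- Let E be a finite-dimensional real normed vector space and let M be a compact set of continuous linear maps from E to E (with the operator-norm topology). Then the set G := {f ∈ M | there exists g ∈ M with g ∘ f = id and f ∘ g = id} of elements of M that are invertible with inverse in M is compact. (In an operational probabilistic theory with finite-dimensional, convex, closed sets of transformations, this yields that the group of reversible transformations is closed and compact with respect to the operational norm.) -/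
/-!
A unit is determined by the pair `(u, u⁻¹)`, and the pairs arising this way are cut out by the
closed conditions `a * b = 1` and `b * a = 1`. Bounding `u` and `u⁻¹` by compact sets therefore
leaves a closed subset of a compact product.
-/

section TopologicalMonoid

variable {α : Type*} [Monoid α] {K L : Set α}

theorem image_val_setOf_val_mem_and_inv_mem :
    Units.val '' {u : αˣ | ↑u ∈ K ∧ ↑u⁻¹ ∈ L} =
      {a | a ∈ K ∧ ∃ b ∈ L, b * a = 1 ∧ a * b = 1} := by
  ext a
  constructor
  · rintro ⟨u, ⟨hu, hu_inv⟩, rfl⟩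
    exact ⟨hu, ↑u⁻¹, hu_inv, u.inv_mul, u.mul_inv⟩
  · rintro ⟨ha, b, hb, hba, hab⟩
    exact ⟨⟨a, b, hab, hba⟩, ⟨ha, hb⟩, rfl⟩

variable [TopologicalSpace α] [ContinuousMul α] [T1Space α]

theorem isCompact_setOf_val_mem_and_inv_mem (hK : IsCompact K) (hL : IsCompact L) :
    IsCompact {u : αˣ | ↑u ∈ K ∧ ↑u⁻¹ ∈ L} := by
  have hL_op : IsCompact (MulOpposite.unop ⁻¹' L) :=
    MulOpposite.opHomeomorph.symm.isCompact_preimage.mpr hL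
  exact Units.isClosedEmbedding_embedProduct.isCompact_preimage (hK.prod hL_op)

theorem isCompact_invertible_subset_general (hK : IsCompact K) (hL : IsCompact L) :
    IsCompact {a | a ∈ K ∧ ∃ b ∈ L, b * a = 1 ∧ a * b = 1} := by
  rw [← image_val_setOf_val_mem_and_inv_mem]
  exact (isCompact_setOf_val_mem_and_inv_mem hK hL).image Units.continuous_val

end TopologicalMonoid

/-- In a finite-dimensional real normed space, for any compact set `M` of continuous
linear endomorphisms, the set of elements of `M` that are invertible with inverse in `M`
is compact. (The group of reversible transformations of an operational probabilistic
theory is compact.) -/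
theorem isCompact_invertible_subset (E : Type*) [NormedAddCommGroup E]
    [NormedSpace ℝ E] [FiniteDimensional ℝ E]
    (M : Set (E →L[ℝ] E)) (hM : IsCompact M) :
    IsCompact {f | f ∈ M ∧ ∃ g ∈ M,
      g.comp f = ContinuousLinearMap.id ℝ E ∧ f.comp g = ContinuousLinearMap.id ℝ E} :=
  isCompact_invertible_subset_general hM hM
end
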